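/- arXiv:2101.02195 — 2 statements merged into one kernel-verified Lean document; each statement's English description precedes it below -/
import Mathlib

section
/- Suppose B divides K and let the uniform batch grid be t_b = (b−1)(K/B) + 1 for b ∈ [B+1]; for each k ∈ [K], let b_k = t_b where b is the unique index with t_b ≤ k < t_{b+1}. Then for any β > 0, Σ_{k=1}^K Σ_{h=1}^H min{H, 2β √(φ_h^{kᵀ} (Λ_h^{b_k})^{−1} φ_h^k)} ≤ (d H T)/(2 B log 2) · log(T/(dH) + 1) + 4β √(2 d H T log(T/(dH) + 1)), where T = KH. -/
open Matrix

/-!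
Fix a step `h`. Along the episodes the Gram matrix `A` changes by rank-one updates, and by the
Sherman–Morrison formula and Cauchy–Schwarz each of them increases `det A * ‖x‖²_{A⁻¹}`. Hence
replacing `A` by a later matrix shrinks `‖x‖²_{A⁻¹}` at most by the ratio of the determinants. Call
a batch bad if the determinant grows by a factor larger than `c = 4` across it. Each bad batch
contributes at least `log c` to `log det`, which is at most `d log (K / d + 1)` in the end, so few
batches are bad; their terms are bounded by the cap `H`. In the other batches the stale matrix can
be replaced by the current one at the price of a factor `c`, and the resulting sum is controlled by
the elliptical potential inequality and Cauchy–Schwarz.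
-/

section RealAndNat

open Real Finset

lemma le_two_mul_log_one_add {x : ℝ} (h0 : 0 ≤ x) (h2 : x ≤ 2) : x ≤ 2 * log (1 + x) := by
  have hlog := le_log_one_add_of_nonneg h0
  have hx : x / 2 ≤ 2 * x / (x + 2) := by
    rw [div_le_div_iff₀ two_pos (by linarith)]
    nlinarith
  linarith

lemma sum_sqrt_le_sqrt_card_mul_sum {α : Type*} (s : Finset α) {f : α → ℝ} (hf : ∀ i, 0 ≤ f i) :
    ∑ i ∈ s, √(f i) ≤ √(#s * ∑ i ∈ s, f i) := by
  simpa using sum_sqrt_mul_sqrt_le s (fun _ ↦ zero_le_one) hf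

lemma card_filter_mul_lt_succ_mul_log_le {D : ℕ → ℝ} (hD : Monotone D) (hpos : ∀ j, 0 < D j)
    {c : ℝ} (hc : 0 < c) (B : ℕ) :
    #{j ∈ range B | c * D j < D (j + 1)} * log c ≤ log (D B) - log (D 0) := by
  calc #{j ∈ range B | c * D j < D (j + 1)} * log c
      = ∑ j ∈ range B with c * D j < D (j + 1), log c := by simp
    _ ≤ ∑ j ∈ range B with c * D j < D (j + 1), (log (D (j + 1)) - log (D j)) := by
        refine sum_le_sum fun j hj ↦ ?_
        have hlog := log_le_log (mul_pos hc (hpos j)) (mem_filter.1 hj).2.le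
        rw [log_mul hc.ne' (hpos j).ne'] at hlog
        linarith
    _ ≤ ∑ j ∈ range B, (log (D (j + 1)) - log (D j)) :=
        sum_le_sum_of_subset_of_nonneg (filter_subset _ _) fun j _ _ ↦
          sub_nonneg.2 (log_le_log (hpos j) (hD j.le_succ))
    _ = log (D B) - log (D 0) := sum_range_sub (fun j ↦ log (D j)) B

lemma sum_range_mul_div {M : Type*} [AddCommMonoid M] (f : ℕ → M) (m B : ℕ) :
    ∑ n ∈ range (B * m), f (n / m) = m • ∑ j ∈ range B, f j := by
  rcases m.eq_zero_or_pos with rfl | hm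
  · simp
  induction B with
  | zero => simp
  | succ B ih =>
    have hdiv : ∀ i ∈ range m, f ((B * m + i) / m) = f B := fun i hi ↦ by
      rw [mul_comm, Nat.mul_add_div hm, Nat.div_eq_of_lt (mem_range.1 hi), add_zero]
    rw [Nat.succ_mul, sum_range_add, ih, sum_range_succ, nsmul_add, sum_congr rfl hdiv, sum_const,
      card_range]

lemma sum_Icc_one_eq_sum_range {M : Type*} [AddCommMonoid M] (f : ℕ → M) (n : ℕ) :
    ∑ k ∈ Icc 1 n, f k = ∑ i ∈ range n, f (i + 1) := by
  rw [range_eq_Ico, sum_Ico_add' f 0 n 1]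
  rfl

lemma uniform_grid_eq_div_mul_add_one {t : ℕ → ℕ} {m b n : ℕ} (ht : ∀ b, t b = (b - 1) * m + 1)
    (hb : 1 ≤ b) (hle : t b ≤ n + 1) (hlt : n + 1 < t (b + 1)) : t b = n / m * m + 1 := by
  obtain ⟨a, rfl⟩ := Nat.exists_eq_add_of_le' hb
  simp only [ht, Nat.add_sub_cancel] at hle hlt ⊢
  rw [Nat.div_eq_of_lt_le (k := a) (by lia) (by lia)]

lemma log_four_eq_two_mul_log_two : log 4 = 2 * log 2 := by
  rw [show (4 : ℝ) = 2 ^ 2 by norm_num, log_pow, Nat.cast_two]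

lemma mul_two_mul_sqrt_four_mul {a : ℝ} (ha : 0 ≤ a) (b x : ℝ) :
    a * (2 * b * √(4 * x)) = 4 * b * √(a ^ 2 * x) := by
  rw [sqrt_mul (by norm_num), sqrt_mul (sq_nonneg a), sqrt_sq ha,
    show (4 : ℝ) = 2 ^ 2 by norm_num, sqrt_sq zero_le_two]
  ring

lemma mul_step_bound_eq {H B : ℝ} (hH : 0 ≤ H) (hB : B ≠ 0) (d m β L : ℝ) :
    H * (m * (d * L / log 4 * H) + 2 * β * √(4 * (2 * d * (B * m) * L))) =
      d * H * (B * m * H) / (2 * B * log 2) * L + 4 * β * √(2 * d * H * (B * m * H) * L) := by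
  rw [mul_add, log_four_eq_two_mul_log_two, mul_two_mul_sqrt_four_mul hH]
  congr 1
  · field_simp
  · ring_nf

end RealAndNat

section RankOneUpdate

variable {ι : Type*} [Fintype ι] [DecidableEq ι]

lemma det_add_vecMulVec {R : Type*} [CommRing R] {A : Matrix ι ι R} (hA : IsUnit A.det)
    (u v : ι → R) : (A + vecMulVec u v).det = A.det * (1 + v ⬝ᵥ A⁻¹ *ᵥ u) := by
  rw [vecMulVec_eq Unit, det_add_replicateCol_mul_replicateRow hA, det_unique (n := Unit),
    Matrix.mul_assoc, ← replicateCol_mulVec]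
  simp

/-- The **Sherman–Morrison formula**. -/
lemma inv_add_vecMulVec_mulVec {F : Type*} [Field F] {A : Matrix ι ι F} (hA : IsUnit A.det)
    {u v : ι → F} (huv : 1 + v ⬝ᵥ A⁻¹ *ᵥ u ≠ 0) (x : ι → F) :
    (A + vecMulVec u v)⁻¹ *ᵥ x =
      A⁻¹ *ᵥ x - (v ⬝ᵥ A⁻¹ *ᵥ x / (1 + v ⬝ᵥ A⁻¹ *ᵥ u)) • A⁻¹ *ᵥ u := by
  have hunit : IsUnit (A + vecMulVec u v).det := by
    rw [det_add_vecMulVec hA]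
    exact hA.mul huv.isUnit
  have hcancel (y : ι → F) : A *ᵥ A⁻¹ *ᵥ y = y := by
    rw [mulVec_mulVec, mul_nonsing_inv _ hA, one_mulVec]
  set z := A⁻¹ *ᵥ x - (v ⬝ᵥ A⁻¹ *ᵥ x / (1 + v ⬝ᵥ A⁻¹ *ᵥ u)) • A⁻¹ *ᵥ u with hz
  have hsolve : (A + vecMulVec u v) *ᵥ z = x := by
    ext i
    simp only [hz, add_mulVec, mulVec_sub, mulVec_smul, hcancel, vecMulVec_mulVec, smul_eq_mul,
      Pi.add_apply, Pi.sub_apply, Pi.smul_apply, MulOpposite.smul_eq_mul_unop, MulOpposite.unop_op]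
    field_simp
    ring
  rw [← hsolve, mulVec_mulVec, nonsing_inv_mul _ hunit, one_mulVec]

end RankOneUpdate

section PositiveMatrix

lemma posDef_add_vecMulVec_self {ι : Type*} [Finite ι] {A : Matrix ι ι ℝ} (hA : A.PosDef)
    (v : ι → ℝ) : (A + vecMulVec v v).PosDef :=
  hA.add_posSemidef (by simpa using posSemidef_vecMulVec_self_star v)

variable {ι : Type*} [Fintype ι] {A : Matrix ι ι ℝ}

lemma dotProduct_mulVec_comm_of_isHermitian (hA : A.IsHermitian) (x y : ι → ℝ) :
    x ⬝ᵥ A *ᵥ y = y ⬝ᵥ A *ᵥ x := by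
  rw [dotProduct_mulVec, ← mulVec_transpose, ← conjTranspose_eq_transpose_of_trivial, hA.eq,
    dotProduct_comm]

lemma dotProduct_mulVec_sq_le_of_posSemidef (hA : A.PosSemidef) (x y : ι → ℝ) :
    (x ⬝ᵥ A *ᵥ y) ^ 2 ≤ (x ⬝ᵥ A *ᵥ x) * (y ⬝ᵥ A *ᵥ y) := by
  classical
  have hcs := LinearMap.BilinForm.apply_mul_apply_le_of_forall_zero_le (toBilin' A)
    (fun z ↦ by simpa [toBilin'_apply'] using hA.dotProduct_mulVec_nonneg z) x y
  simp only [toBilin'_apply'] at hcs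
  rwa [dotProduct_mulVec_comm_of_isHermitian hA.isHermitian y x, ← sq] at hcs

/-- AM-GM for the eigenvalues, through the tangent line of `log` at `c`. -/
lemma log_det_le_of_trace_le [DecidableEq ι] (hA : A.PosDef) {c : ℝ} (hc : 0 < c)
    (htr : A.trace ≤ Fintype.card ι * c) : Real.log A.det ≤ Fintype.card ι * Real.log c := by
  have hpos := hA.eigenvalues_pos
  have htangent (i : ι) : Real.log (hA.isHermitian.eigenvalues i) ≤
      hA.isHermitian.eigenvalues i / c + (Real.log c - 1) := by
    have h := Real.log_le_sub_one_of_pos (div_pos (hpos i) hc)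
    rw [Real.log_div (hpos i).ne' hc.ne'] at h
    linarith
  calc Real.log A.det = ∑ i, Real.log (hA.isHermitian.eigenvalues i) := by
        rw [hA.isHermitian.det_eq_prod_eigenvalues]
        exact Real.log_prod fun i _ ↦ (hpos i).ne'
    _ ≤ ∑ i, (hA.isHermitian.eigenvalues i / c + (Real.log c - 1)) :=
        Finset.sum_le_sum fun i _ ↦ htangent i
    _ = A.trace / c + Fintype.card ι * (Real.log c - 1) := by
        simp [Finset.sum_add_distrib, ← Finset.sum_div, hA.isHermitian.trace_eq_sum_eigenvalues,
          mul_sub]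
    _ ≤ Fintype.card ι * Real.log c := by
        have := (div_le_iff₀ hc).2 htr
        linarith

end PositiveMatrix

section InvQuadForm

variable {ι : Type*} [Fintype ι] [DecidableEq ι] {A : Matrix ι ι ℝ}

/-- The quadratic form `‖x‖²_{A⁻¹} = xᵀ A⁻¹ x`; its square root is the exploration bonus of the
direction `x` when `A` collects the directions explored so far. -/
noncomputable def invQuadForm (A : Matrix ι ι ℝ) (x : ι → ℝ) : ℝ :=
  x ⬝ᵥ A⁻¹ *ᵥ x

lemma invQuadForm_one (x : ι → ℝ) : invQuadForm 1 x = x ⬝ᵥ x := by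
  simp [invQuadForm]

lemma invQuadForm_nonneg (hA : A.PosDef) (x : ι → ℝ) : 0 ≤ invQuadForm A x := by
  simpa [invQuadForm] using hA.inv.posSemidef.dotProduct_mulVec_nonneg x

lemma det_add_vecMulVec_self (hA : A.PosDef) (v : ι → ℝ) :
    (A + vecMulVec v v).det = A.det * (1 + invQuadForm A v) :=
  det_add_vecMulVec hA.det_pos.ne'.isUnit v v

lemma det_le_det_add_vecMulVec_self (hA : A.PosDef) (v : ι → ℝ) :
    A.det ≤ (A + vecMulVec v v).det := by
  rw [det_add_vecMulVec_self hA]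
  exact le_mul_of_one_le_right hA.det_pos.le (le_add_of_nonneg_right (invQuadForm_nonneg hA v))

lemma invQuadForm_add_vecMulVec_self (hA : A.PosDef) (v x : ι → ℝ) :
    invQuadForm (A + vecMulVec v v) x =
      invQuadForm A x - (x ⬝ᵥ A⁻¹ *ᵥ v) ^ 2 / (1 + invQuadForm A v) := by
  have hne : 1 + v ⬝ᵥ A⁻¹ *ᵥ v ≠ 0 := by
    have : 0 ≤ v ⬝ᵥ A⁻¹ *ᵥ v := invQuadForm_nonneg hA v
    positivity
  rw [invQuadForm, inv_add_vecMulVec_mulVec hA.det_pos.ne'.isUnit hne, dotProduct_sub,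
    dotProduct_smul, smul_eq_mul, dotProduct_mulVec_comm_of_isHermitian hA.inv.isHermitian v x,
    div_mul_eq_mul_div, ← sq, invQuadForm, invQuadForm]

lemma invQuadForm_add_vecMulVec_self_le (hA : A.PosDef) (v x : ι → ℝ) :
    invQuadForm (A + vecMulVec v v) x ≤ invQuadForm A x := by
  have := invQuadForm_nonneg hA v
  rw [invQuadForm_add_vecMulVec_self hA]
  exact sub_le_self _ (by positivity)

lemma det_mul_invQuadForm_le_add_vecMulVec_self (hA : A.PosDef) (v x : ι → ℝ) :
    A.det * invQuadForm A x ≤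
      (A + vecMulVec v v).det * invQuadForm (A + vecMulVec v v) x := by
  have hv : 0 < 1 + invQuadForm A v := add_pos_of_pos_of_nonneg one_pos (invQuadForm_nonneg hA v)
  have hcs : (x ⬝ᵥ A⁻¹ *ᵥ v) ^ 2 ≤ invQuadForm A x * invQuadForm A v :=
    dotProduct_mulVec_sq_le_of_posSemidef hA.inv.posSemidef x v
  rw [det_add_vecMulVec_self hA, invQuadForm_add_vecMulVec_self hA, mul_assoc, mul_sub,
    mul_div_cancel₀ _ hv.ne']
  exact mul_le_mul_of_nonneg_left (by linarith) hA.det_pos.le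

end InvQuadForm

section RegGram

variable {ι : Type*} [DecidableEq ι]

/-- The regularized Gram matrix `I + ∑_{i < n} vᵢ vᵢᵀ` of the first `n` vectors of a sequence. With
`vᵢ = φ_h^{i+1}` it is the matrix `Λ_h^{n+1}` of the paper, whose episodes are counted from `1`. -/
def regGram (v : ℕ → ι → ℝ) (n : ℕ) : Matrix ι ι ℝ :=
  1 + ∑ i ∈ Finset.range n, vecMulVec (v i) (v i)

lemma regGram_zero (v : ℕ → ι → ℝ) : regGram v 0 = 1 := by
  simp [regGram]

lemma regGram_succ (v : ℕ → ι → ℝ) (n : ℕ) :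
    regGram v (n + 1) = regGram v n + vecMulVec (v n) (v n) := by
  rw [regGram, Finset.sum_range_succ, ← add_assoc, regGram]

lemma posDef_regGram [Finite ι] (v : ℕ → ι → ℝ) (n : ℕ) : (regGram v n).PosDef := by
  induction n with
  | zero => exact regGram_zero v ▸ PosDef.one
  | succ n ih => exact regGram_succ v n ▸ posDef_add_vecMulVec_self ih (v n)

variable [Fintype ι] (v : ℕ → ι → ℝ)

lemma monotone_det_regGram : Monotone fun n ↦ (regGram v n).det :=
  monotone_nat_of_le_succ fun n ↦
    regGram_succ v n ▸ det_le_det_add_vecMulVec_self (posDef_regGram v n) (v n)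

lemma antitone_invQuadForm_regGram (x : ι → ℝ) : Antitone fun n ↦ invQuadForm (regGram v n) x :=
  antitone_nat_of_succ_le fun n ↦
    regGram_succ v n ▸ invQuadForm_add_vecMulVec_self_le (posDef_regGram v n) (v n) x

lemma monotone_det_mul_invQuadForm_regGram (x : ι → ℝ) :
    Monotone fun n ↦ (regGram v n).det * invQuadForm (regGram v n) x :=
  monotone_nat_of_le_succ fun n ↦
    regGram_succ v n ▸ det_mul_invQuadForm_le_add_vecMulVec_self (posDef_regGram v n) (v n) x

variable {v}

lemma invQuadForm_regGram_le_mul_of_det_le {i n j : ℕ} (hin : i ≤ n) (hnj : n ≤ j) {c : ℝ}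
    (hdet : (regGram v j).det ≤ c * (regGram v i).det) (x : ι → ℝ) :
    invQuadForm (regGram v i) x ≤ c * invQuadForm (regGram v n) x := by
  refine le_of_mul_le_mul_left ?_ (posDef_regGram v i).det_pos
  calc (regGram v i).det * invQuadForm (regGram v i) x
      ≤ (regGram v n).det * invQuadForm (regGram v n) x :=
        monotone_det_mul_invQuadForm_regGram v x hin
    _ ≤ (c * (regGram v i).det) * invQuadForm (regGram v n) x :=
        mul_le_mul_of_nonneg_right ((monotone_det_regGram v hnj).trans hdet)
          (invQuadForm_nonneg (posDef_regGram v n) x)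
    _ = (regGram v i).det * (c * invQuadForm (regGram v n) x) := by ring

lemma sum_log_one_add_invQuadForm_regGram (n : ℕ) :
    ∑ i ∈ Finset.range n, Real.log (1 + invQuadForm (regGram v i) (v i)) =
      Real.log (regGram v n).det := by
  induction n with
  | zero => simp [regGram_zero]
  | succ n ih =>
    have hA := posDef_regGram v n
    have := invQuadForm_nonneg hA (v n)
    rw [Finset.sum_range_succ, ih, regGram_succ, det_add_vecMulVec_self hA,
      Real.log_mul hA.det_pos.ne' (by positivity)]

variable {N : ℕ}

/-- The **elliptical potential inequality**. -/
lemma sum_invQuadForm_regGram_le (hv : ∀ n < N, v n ⬝ᵥ v n ≤ 1) :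
    ∑ n ∈ Finset.range N, invQuadForm (regGram v n) (v n) ≤ 2 * Real.log (regGram v N).det := by
  rw [← sum_log_one_add_invQuadForm_regGram, Finset.mul_sum]
  refine Finset.sum_le_sum fun n hn ↦
    le_two_mul_log_one_add (invQuadForm_nonneg (posDef_regGram v n) _) ?_
  calc invQuadForm (regGram v n) (v n)
      ≤ invQuadForm (regGram v 0) (v n) := antitone_invQuadForm_regGram v (v n) n.zero_le
    _ = v n ⬝ᵥ v n := by rw [regGram_zero, invQuadForm_one]
    _ ≤ 2 := (hv n (Finset.mem_range.1 hn)).trans one_le_two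

lemma trace_regGram_le (hv : ∀ n < N, v n ⬝ᵥ v n ≤ 1) :
    (regGram v N).trace ≤ Fintype.card ι + N := by
  have hsum : ∑ n ∈ Finset.range N, v n ⬝ᵥ v n ≤ ∑ _n ∈ Finset.range N, (1 : ℝ) :=
    Finset.sum_le_sum fun n hn ↦ hv n (Finset.mem_range.1 hn)
  simpa [regGram, trace_sum] using hsum

lemma log_det_regGram_le (hv : ∀ n < N, v n ⬝ᵥ v n ≤ 1) :
    Real.log (regGram v N).det ≤
      Fintype.card ι * Real.log (N / Fintype.card ι + 1) := by
  rcases isEmpty_or_nonempty ι with _ | _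
  · simp
  refine log_det_le_of_trace_le (posDef_regGram v N) (by positivity)
    ((trace_regGram_le hv).trans_eq ?_)
  field_simp
  ring

end RegGram

section Batches

variable {ι : Type*} [Fintype ι] [DecidableEq ι] {v : ℕ → ι → ℝ} {c : ℝ}

/-- The batches `{j * m, …, (j + 1) * m - 1}`, among the first `B`, across which the determinant of
the regularized Gram matrix grows by a factor larger than `c`. -/
noncomputable def badBatches (v : ℕ → ι → ℝ) (m B : ℕ) (c : ℝ) : Finset ℕ :=
  {j ∈ Finset.range B | c * (regGram v (j * m)).det < (regGram v ((j + 1) * m)).det}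

lemma badBatches_subset_range (v : ℕ → ι → ℝ) (m B : ℕ) (c : ℝ) :
    badBatches v m B c ⊆ Finset.range B :=
  Finset.filter_subset _ _

lemma card_badBatches_mul_log_le (hc : 0 < c) (m B : ℕ) :
    (badBatches v m B c).card * Real.log c ≤ Real.log (regGram v (B * m)).det := by
  have hmono : Monotone fun j ↦ (regGram v (j * m)).det :=
    (monotone_det_regGram v).comp fun _ _ h ↦ Nat.mul_le_mul_right m h
  simpa [badBatches, regGram_zero] using card_filter_mul_lt_succ_mul_log_le hmono
    (fun j ↦ (posDef_regGram v (j * m)).det_pos) hc B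

lemma invQuadForm_batchStart_le_of_notMem_badBatches {m B n : ℕ} (hn : n < B * m)
    (hgood : n / m ∉ badBatches v m B c) (x : ι → ℝ) :
    invQuadForm (regGram v (n / m * m)) x ≤ c * invQuadForm (regGram v n) x := by
  have hm : 0 < m := Nat.pos_of_mul_pos_left (Nat.zero_lt_of_lt hn)
  have hmem : n / m ∈ Finset.range B := Finset.mem_range.2 (Nat.div_lt_of_lt_mul (by lia))
  have hdet : (regGram v ((n / m + 1) * m)).det ≤ c * (regGram v (n / m * m)).det := by
    simpa [badBatches, hmem] using hgood
  exact invQuadForm_regGram_le_mul_of_det_le (Nat.div_mul_le_self n m)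
    (Nat.lt_div_mul_add hm |>.le.trans_eq (by ring)) hdet x

lemma sum_min_batchStart_le_card_badBatches {M γ : ℝ} (hγ : 0 ≤ γ) (m B : ℕ) :
    ∑ n ∈ Finset.range (B * m), min M (γ * √(invQuadForm (regGram v (n / m * m)) (v n))) ≤
      m * ((badBatches v m B c).card * M) +
        γ * ∑ n ∈ Finset.range (B * m), √(c * invQuadForm (regGram v n) (v n)) := by
  have hterm : ∀ n ∈ Finset.range (B * m),
      min M (γ * √(invQuadForm (regGram v (n / m * m)) (v n))) ≤
        (if n / m ∈ badBatches v m B c then M else 0) +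
          γ * √(c * invQuadForm (regGram v n) (v n)) := by
    intro n hn
    split_ifs with hbad
    · exact (min_le_left _ _).trans (le_add_of_nonneg_right (by positivity))
    · rw [zero_add]
      refine (min_le_right _ _).trans (mul_le_mul_of_nonneg_left (Real.sqrt_le_sqrt ?_) hγ)
      exact invQuadForm_batchStart_le_of_notMem_badBatches (Finset.mem_range.1 hn) hbad (v n)
  have hcap : ∑ n ∈ Finset.range (B * m), (if n / m ∈ badBatches v m B c then M else 0) =
      m * ((badBatches v m B c).card * M) := by
    rw [sum_range_mul_div (fun j ↦ if j ∈ badBatches v m B c then M else 0), Finset.sum_ite_mem,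
      Finset.inter_eq_right.2 (badBatches_subset_range v m B c), Finset.sum_const, nsmul_eq_mul,
      nsmul_eq_mul]
  refine (Finset.sum_le_sum hterm).trans_eq ?_
  rw [Finset.sum_add_distrib, hcap, ← Finset.mul_sum]

lemma sum_sqrt_mul_invQuadForm_regGram_le (hc : 0 ≤ c) {N : ℕ}
    (hv : ∀ n < N, v n ⬝ᵥ v n ≤ 1) :
    ∑ n ∈ Finset.range N, √(c * invQuadForm (regGram v n) (v n)) ≤
      √(c * (2 * Fintype.card ι * N * Real.log (N / Fintype.card ι + 1))) := by
  refine (sum_sqrt_le_sqrt_card_mul_sum (Finset.range N) fun n ↦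
    mul_nonneg hc (invQuadForm_nonneg (posDef_regGram v n) (v n))).trans (Real.sqrt_le_sqrt ?_)
  rw [Finset.card_range, ← Finset.mul_sum]
  calc N * (c * ∑ n ∈ Finset.range N, invQuadForm (regGram v n) (v n))
      ≤ N * (c * (2 * (Fintype.card ι * Real.log (N / Fintype.card ι + 1)))) := by
        gcongr
        exact (sum_invQuadForm_regGram_le hv).trans (by gcongr; exact log_det_regGram_le hv)
    _ = c * (2 * Fintype.card ι * N * Real.log (N / Fintype.card ι + 1)) := by ring

lemma card_badBatches_le (hc : 1 < c) {m B : ℕ} (hv : ∀ n < B * m, v n ⬝ᵥ v n ≤ 1) :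
    (badBatches v m B c).card ≤
      Fintype.card ι * Real.log ((B * m : ℕ) / Fintype.card ι + 1) / Real.log c := by
  rw [le_div_iff₀ (Real.log_pos hc)]
  exact (card_badBatches_mul_log_le (one_pos.trans hc) m B).trans (log_det_regGram_le hv)

lemma sum_min_batchStart_le (hc : 1 < c) {M γ : ℝ} (hM : 0 ≤ M) (hγ : 0 ≤ γ)
    {m B : ℕ} (hv : ∀ n < B * m, v n ⬝ᵥ v n ≤ 1) :
    ∑ n ∈ Finset.range (B * m), min M (γ * √(invQuadForm (regGram v (n / m * m)) (v n))) ≤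
      m * (Fintype.card ι * Real.log ((B * m : ℕ) / Fintype.card ι + 1) / Real.log c * M) +
        γ * √(c * (2 * Fintype.card ι * (B * m : ℕ) *
          Real.log ((B * m : ℕ) / Fintype.card ι + 1))) := by
  refine (sum_min_batchStart_le_card_badBatches (c := c) hγ m B).trans ?_
  gcongr
  · exact card_badBatches_le hc hv
  · exact sum_sqrt_mul_invQuadForm_regGram_le (by linarith) hv

lemma sum_Icc_min_grid_le (hc : 1 < c) {M γ : ℝ} (hM : 0 ≤ M) (hγ : 0 ≤ γ)
    {m B : ℕ} {φ : ℕ → ι → ℝ} (hφ : ∀ k ∈ Finset.Icc 1 (B * m), φ k ⬝ᵥ φ k ≤ 1)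
    {Λ : ℕ → Matrix ι ι ℝ} (hΛ : ∀ n, Λ (n + 1) = regGram (fun i ↦ φ (i + 1)) n)
    {bk : ℕ → ℕ} (hbk : ∀ n < B * m, bk (n + 1) = n / m * m + 1) :
    ∑ k ∈ Finset.Icc 1 (B * m), min M (γ * √(invQuadForm (Λ (bk k)) (φ k))) ≤
      m * (Fintype.card ι * Real.log ((B * m : ℕ) / Fintype.card ι + 1) / Real.log c * M) +
        γ * √(c * (2 * Fintype.card ι * (B * m : ℕ) *
          Real.log ((B * m : ℕ) / Fintype.card ι + 1))) := by
  rw [sum_Icc_one_eq_sum_range, Finset.sum_congr rfl fun n hn ↦ by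
    rw [hbk n (Finset.mem_range.1 hn), hΛ]]
  exact sum_min_batchStart_le hc hM hγ fun n hn ↦ hφ (n + 1) (Finset.mem_Icc.2 (by lia))

end Batches

/-- With `B ∣ K`, the uniform batch grid `t_b = (b-1)(K/B) + 1`,
`b_k = t_b` for the unique `b` with `t_b ≤ k < t_{b+1}`, and `T = KH`, for any
`β > 0`,
`∑_{k=1}^K ∑_{h=1}^H min{H, 2β √(φ_h^kᵀ (Λ_h^{b_k})⁻¹ φ_h^k)}
  ≤ (dHT)/(2B log 2) · log(T/(dH)+1) + 4β √(2 d H T log(T/(dH)+1))`. -/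
theorem stmt_11 (d H K B : ℕ) (hd : 1 ≤ d) (hH : 1 ≤ H) (hK : 1 ≤ K)
    (hB : 1 ≤ B) (hdvd : B ∣ K)
    (φ : ℕ → ℕ → Fin d → ℝ)
    (hφ : ∀ h ∈ Finset.Icc 1 H, ∀ k ∈ Finset.Icc 1 K,
      Real.sqrt (φ h k ⬝ᵥ φ h k) ≤ 1)
    (Λ : ℕ → ℕ → Matrix (Fin d) (Fin d) ℝ)
    (hΛ : ∀ h k, Λ h k = (1 : Matrix (Fin d) (Fin d) ℝ) +
      ∑ τ ∈ Finset.Icc 1 (k - 1), Matrix.vecMulVec (φ h τ) (φ h τ))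
    (t : ℕ → ℕ) (ht : ∀ b, t b = (b - 1) * (K / B) + 1)
    (bk : ℕ → ℕ)
    (hbk : ∀ k ∈ Finset.Icc 1 K, ∃ b ∈ Finset.Icc 1 B,
      bk k = t b ∧ t b ≤ k ∧ k < t (b + 1))
    (T : ℕ) (hT : T = K * H)
    (β : ℝ) (hβ : 0 < β) :
    ∑ k ∈ Finset.Icc 1 K, ∑ h ∈ Finset.Icc 1 H,
        min (H : ℝ)
          (2 * β * Real.sqrt (φ h k ⬝ᵥ (Λ h (bk k))⁻¹.mulVec (φ h k)))
      ≤ (d * H * T) / (2 * B * Real.log 2) * Real.log ((T : ℝ) / (d * H) + 1)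
        + 4 * β * Real.sqrt (2 * d * H * T * Real.log ((T : ℝ) / (d * H) + 1)) := by
  obtain ⟨m, rfl⟩ := hdvd
  rw [Nat.mul_div_cancel_left m hB] at ht
  have hΛ_eq (h n : ℕ) : Λ h (n + 1) = regGram (fun i ↦ φ h (i + 1)) n := by
    rw [hΛ, regGram, Nat.add_sub_cancel, sum_Icc_one_eq_sum_range]
  have hbk_eq : ∀ n < B * m, bk (n + 1) = n / m * m + 1 := fun n hn ↦ by
    obtain ⟨b, hb, hbk_t, hle, hlt⟩ := hbk (n + 1) (Finset.mem_Icc.2 (by lia))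
    rw [hbk_t, uniform_grid_eq_div_mul_add_one ht (Finset.mem_Icc.1 hb).1 hle hlt]
  have hratio : (T : ℝ) / (d * H) + 1 = B * m / d + 1 := by
    rw [hT, Nat.cast_mul, mul_div_mul_right _ _ (by positivity), Nat.cast_mul]
  rw [hratio, Finset.sum_comm]
  set L := Real.log (B * m / d + 1)
  have hstep : ∀ h ∈ Finset.Icc 1 H, ∑ k ∈ Finset.Icc 1 (B * m),
      min (H : ℝ) (2 * β * √(φ h k ⬝ᵥ (Λ h (bk k))⁻¹ *ᵥ φ h k)) ≤
        m * (d * L / Real.log 4 * H) + 2 * β * √(4 * (2 * d * (B * m) * L)) := fun h hh ↦ by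
    simpa [L, invQuadForm] using sum_Icc_min_grid_le (c := 4) (by norm_num) H.cast_nonneg
      (by positivity : 0 ≤ 2 * β) (fun k hk ↦ Real.sqrt_le_one.1 (hφ h hh k hk)) (hΛ_eq h) hbk_eq
  refine (Finset.sum_le_sum hstep).trans_eq ?_
  rw [Finset.sum_const, Nat.card_Icc, Nat.add_sub_cancel, nsmul_eq_mul,
    mul_step_bound_eq H.cast_nonneg (by positivity), hT, Nat.cast_mul, Nat.cast_mul]
end

section
/- Let η > 1 and suppose 0 = k_0 < k_1 < ⋯ < k_m ≤ K are indices such that det(Λ^{k_i + 1}) ≥ η · det(Λ^{k_{i−1} + 1}) for every i ∈ [m] (here Λ^{k+1} is the Gram matrix built from the first k vectors, so Λ^{k_0+1} = Λ^1 = λ I_d). Then m ≤ (d / log η) · log(1 + K/(λ d)). -/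
open Matrix

/-!
The determinant grows by a factor `η` at each of the `m` indices, so it ends up at least `η ^ m`
times its initial value `λ ^ d`. On the other hand, the inequality of arithmetic and geometric means
for the eigenvalues of a positive semidefinite matrix bounds its determinant by `(trace / d) ^ d`,
and the trace increases by `‖φ‖² ≤ 1` with each vector, so it ends up at most `λ d + K`. Comparing
logarithms gives the bound on `m`.
-/

section

open Finset
open scoped ComplexOrder

variable {ι n 𝕜 : Type*} [RCLike 𝕜]

theorem prod_le_sum_div_card_pow {s : Finset ι} (hs : s.Nonempty) {z : ι → ℝ}
    (hz : ∀ i ∈ s, 0 ≤ z i) : ∏ i ∈ s, z i ≤ ((∑ i ∈ s, z i) / #s) ^ #s := by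
  have hcard : (0 : ℝ) < #s := by exact_mod_cast hs.card_pos
  have amgm := Real.geom_mean_le_arith_mean s (fun _ ↦ 1) z (fun _ _ ↦ zero_le_one)
    (by simpa using hcard) hz
  simp only [Real.rpow_one, sum_const, nsmul_eq_mul, mul_one, one_mul] at amgm
  rwa [Real.rpow_inv_le_iff_of_pos (prod_nonneg hz) (div_nonneg (sum_nonneg hz) hcard.le) hcard,
    Real.rpow_natCast] at amgm

theorem re_det_le_re_trace_div_card_pow [Fintype n] [DecidableEq n] [Nonempty n]
    {A : Matrix n n 𝕜} (hA : A.PosSemidef) :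
    RCLike.re A.det ≤ (RCLike.re A.trace / Fintype.card n) ^ Fintype.card n := by
  rw [hA.isHermitian.det_eq_prod_eigenvalues, hA.isHermitian.trace_eq_sum_eigenvalues,
    ← RCLike.ofReal_prod, ← RCLike.ofReal_sum, RCLike.ofReal_re, RCLike.ofReal_re]
  exact prod_le_sum_div_card_pow univ_nonempty fun i _ ↦ hA.eigenvalues_nonneg i

variable [DecidableEq n]

/-- The regularized Gram matrix `lam I + ∑ φ φᴴ` of the vectors `φ τ`, `τ ∈ s`. It is the matrix
`Λ^{k+1}` of the paper when `s` is the set `{1, …, k}`. -/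
def regularizedGram (lam : ℝ) (φ : ι → n → 𝕜) (s : Finset ι) : Matrix n n 𝕜 :=
  lam • 1 + ∑ τ ∈ s, vecMulVec (φ τ) (star (φ τ))

namespace regularizedGram

theorem posSemidef [Finite n] {lam : ℝ} (hlam : 0 ≤ lam) (φ : ι → n → 𝕜) (s : Finset ι) :
    (regularizedGram lam φ s).PosSemidef :=
  (PosSemidef.one.smul hlam).add
    (posSemidef_sum s fun τ _ ↦ posSemidef_vecMulVec_self_star (φ τ))

variable [Fintype n]

theorem re_det_empty (lam : ℝ) (φ : ι → n → 𝕜) :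
    RCLike.re (regularizedGram lam φ ∅).det = lam ^ Fintype.card n := by
  simp [regularizedGram, det_smul_of_tower, RCLike.smul_re]

theorem re_trace (lam : ℝ) (φ : ι → n → 𝕜) (s : Finset ι) :
    RCLike.re (regularizedGram lam φ s).trace =
      lam * Fintype.card n + ∑ τ ∈ s, RCLike.re (φ τ ⬝ᵥ star (φ τ)) := by
  simp [regularizedGram, trace_sum, trace_vecMulVec, RCLike.smul_re]

theorem re_det_div_le [Nonempty n] {lam : ℝ} (hlam : 0 < lam) (φ : ι → n → 𝕜) (s : Finset ι) :
    RCLike.re (regularizedGram lam φ s).det / lam ^ Fintype.card n ≤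
      (1 + (∑ τ ∈ s, RCLike.re (φ τ ⬝ᵥ star (φ τ))) / (lam * Fintype.card n)) ^
        Fintype.card n := by
  have hcard : (Fintype.card n : ℝ) ≠ 0 := by exact_mod_cast Fintype.card_ne_zero
  rw [div_le_iff₀ (pow_pos hlam _), ← mul_pow]
  calc RCLike.re (regularizedGram lam φ s).det
      ≤ (RCLike.re (regularizedGram lam φ s).trace / Fintype.card n) ^ Fintype.card n :=
        re_det_le_re_trace_div_card_pow (posSemidef hlam.le φ s)
    _ = ((1 + (∑ τ ∈ s, RCLike.re (φ τ ⬝ᵥ star (φ τ))) / (lam * Fintype.card n)) * lam) ^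
          Fintype.card n := by
        rw [re_trace]
        congr 1
        field_simp

end regularizedGram

/-- The set `S i` plays the role of `{1, …, k_i}`. -/
theorem stmt_12_general [Fintype n] [Nonempty n] {lam : ℝ} (hlam : 0 < lam) (φ : ι → n → 𝕜)
    {η : ℝ} (hη : 1 < η) {m : ℕ} {S : ℕ → Finset ι} (hS₀ : S 0 = ∅)
    (hgrow : ∀ i < m, η * RCLike.re (regularizedGram lam φ (S i)).det ≤
      RCLike.re (regularizedGram lam φ (S (i + 1))).det)
    {B : ℝ} (hB : ∑ τ ∈ S m, RCLike.re (φ τ ⬝ᵥ star (φ τ)) ≤ B) :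
    (m : ℝ) ≤ (Fintype.card n / Real.log η) * Real.log (1 + B / (lam * Fintype.card n)) := by
  have hη₀ : 0 < η := one_pos.trans hη
  have henergy : 0 ≤ ∑ τ ∈ S m, RCLike.re (φ τ ⬝ᵥ star (φ τ)) :=
    sum_nonneg fun τ _ ↦ (RCLike.nonneg_iff.1 (dotProduct_self_star_nonneg (φ τ))).1
  have hpow : η ^ m ≤ (1 + B / (lam * Fintype.card n)) ^ Fintype.card n :=
    calc η ^ m ≤ RCLike.re (regularizedGram lam φ (S m)).det / lam ^ Fintype.card n := by
          rw [le_div_iff₀ (pow_pos hlam _), ← regularizedGram.re_det_empty lam φ, ← hS₀]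
          exact geom_le (u := fun i ↦ RCLike.re (regularizedGram lam φ (S i)).det) hη₀.le m hgrow
      _ ≤ (1 + (∑ τ ∈ S m, RCLike.re (φ τ ⬝ᵥ star (φ τ))) / (lam * Fintype.card n)) ^
            Fintype.card n := regularizedGram.re_det_div_le hlam φ (S m)
      _ ≤ (1 + B / (lam * Fintype.card n)) ^ Fintype.card n := by gcongr
  have hlog := Real.log_le_log (pow_pos hη₀ m) hpow
  rw [Real.log_pow, Real.log_pow] at hlog
  rwa [div_mul_eq_mul_div, le_div_iff₀ (Real.log_pos hη)]

end

/-- Let `η > 1` and `0 = k_0 < k_1 < ⋯ < k_m ≤ K` be indices with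
`det(Λ^{k_i + 1}) ≥ η · det(Λ^{k_{i-1} + 1})` for every `i ∈ [m]` (where
`Λ^{k+1}` is the Gram matrix built from the first `k` vectors, so
`Λ^{k_0+1} = Λ^1 = λ I_d`). Then `m ≤ (d / log η) · log(1 + K/(λ d))`. -/
theorem stmt_12 (d K : ℕ) (hd : 1 ≤ d) (lam : ℝ) (hlam : 0 < lam)
    (φ : ℕ → Fin d → ℝ)
    (hφ : ∀ τ ∈ Finset.Icc 1 K, Real.sqrt (φ τ ⬝ᵥ φ τ) ≤ 1)
    (Λ : ℕ → Matrix (Fin d) (Fin d) ℝ)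
    (hΛ : ∀ j, Λ j = lam • (1 : Matrix (Fin d) (Fin d) ℝ) +
      ∑ τ ∈ Finset.Icc 1 (j - 1), Matrix.vecMulVec (φ τ) (φ τ))
    (η : ℝ) (hη : 1 < η) (m : ℕ) (k : ℕ → ℕ)
    (hk0 : k 0 = 0)
    (hmono : ∀ i ∈ Finset.Icc 1 m, k (i - 1) < k i)
    (hkm : k m ≤ K)
    (hgrow : ∀ i ∈ Finset.Icc 1 m,
      η * (Λ (k (i - 1) + 1)).det ≤ (Λ (k i + 1)).det) :
    (m : ℝ) ≤ (d / Real.log η) * Real.log (1 + K / (lam * d)) := by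
  have : Nonempty (Fin d) := ⟨0, hd⟩
  have hΛ_gram (j : ℕ) : Λ (j + 1) = regularizedGram lam φ (Finset.Icc 1 j) := by
    simp [hΛ, regularizedGram]
  have henergy : ∑ τ ∈ Finset.Icc 1 (k m), φ τ ⬝ᵥ φ τ ≤ K :=
    calc ∑ τ ∈ Finset.Icc 1 (k m), φ τ ⬝ᵥ φ τ ≤ ∑ τ ∈ Finset.Icc 1 (k m), 1 :=
          Finset.sum_le_sum fun τ hτ ↦
            Real.sqrt_le_one.1 (hφ τ (Finset.Icc_subset_Icc_right hkm hτ))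
      _ = k m := by simp
      _ ≤ K := by exact_mod_cast hkm
  have hgrow_gram (i : ℕ) (hi : i < m) :
      η * (regularizedGram lam φ (Finset.Icc 1 (k i))).det ≤
        (regularizedGram lam φ (Finset.Icc 1 (k (i + 1)))).det := by
    simpa [hΛ_gram] using hgrow (i + 1) (Finset.mem_Icc.2 ⟨by omega, hi⟩)
  simpa using stmt_12_general hlam φ hη (S := fun i ↦ Finset.Icc 1 (k i)) (by simp [hk0])
    (by simpa using hgrow_gram) (by simpa using henergy)
end
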